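/- Let a > 1 and b ∈ ℝ, 0 < |b| < 1/3. Define the linear functional S̃ on polynomials by S̃(w) = ∫₀^{2π} w(e^{iθ}) p(θ,a,b) dθ, where 2π p(θ,a,b) = -1 + 2(a-1)∫₀¹ e^{-bu cos θ} cos(bu sin θ)(1-u)^{a-2} du. Then S̃(z^n) = (-b)^n/(a)_n for all n ∈ ℤ₊, and consequently for the moments m_n' = (-b)^{n+1}/(a)_n of the Krall–Frink functional S one has S̃(w) = -(1/b) S(w) for every polynomial w. -/

import Mathlib

/-!
Put `F(z) = ₁F₁(1; a; -bz) = ∑ (-b)ⁿ zⁿ / (a)ₙ`. Euler's integral for `₁F₁` and the identity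
`2 e^{-t cos θ} cos (t sin θ) = e^{-tz} + e^{-t/z}`, `z = e^{iθ}`, turn the density into
`2π p(θ) = F(z) + F(z⁻¹) - F(0)`. When this is averaged against `zⁿ` over the unit circle,
`zⁿ (F(z) - F(0))` contributes nothing by the mean value property, and `zⁿ F(z⁻¹)` contributes the
`n`-th Taylor coefficient of `F` by Cauchy's formula.
-/

open Complex MeasureTheory Metric Polynomial Real

section FiniteLaplace

variable {E : Type*} [NormedAddCommGroup E] [NormedSpace ℂ E] {μ : Measure ℝ} {c d : ℝ} {φ : ℝ → E}

/-- The finite Laplace transform `z ↦ ∫ e^{zt} φ(t) dμ(t)` over the interval from `c` to `d`, with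
the sign convention of a moment generating function. -/
noncomputable def finiteLaplace (μ : Measure ℝ) (c d : ℝ) (φ : ℝ → E) (z : ℂ) : E :=
  ∫ t in c..d, cexp (z * t) • φ t ∂μ

theorem hasDerivAt_finiteLaplace (hφ : IntervalIntegrable φ μ c d) (z : ℂ) :
    HasDerivAt (finiteLaplace μ c d φ) (finiteLaplace μ c d (fun t ↦ (t : ℂ) • φ t) z) z := by
  have integrand_integrable {ψ : ℝ → E} (hψ : IntervalIntegrable ψ μ c d) (w : ℂ) :
      IntervalIntegrable (fun t : ℝ ↦ cexp (w * t) • ψ t) μ c d :=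
    hψ.continuousOn_smul (by fun_prop)
  have hφ' : IntervalIntegrable (fun t : ℝ ↦ (t : ℂ) • φ t) μ c d :=
    hφ.continuousOn_smul (by fun_prop)
  refine (intervalIntegral.hasDerivAt_integral_of_dominated_loc_of_deriv_le
    (F' := fun w t ↦ cexp (w * t) • (t : ℂ) • φ t)
    (bound := fun t ↦ Real.exp ((‖z‖ + 1) * |t|) * ‖(t : ℂ) • φ t‖) (ball_mem_nhds z one_pos)
    (.of_forall fun w ↦ (integrand_integrable hφ w).aestronglyMeasurable_restrict_uIoc)
    (integrand_integrable hφ z) (integrand_integrable hφ' z).aestronglyMeasurable_restrict_uIoc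
    (.of_forall fun t _ w hw ↦ ?_) (hφ'.norm.continuousOn_mul (by fun_prop))
    (.of_forall fun t _ w _ ↦ ?_)).2
  · have norm_le : ‖w‖ ≤ ‖z‖ + 1 := by
      linarith [norm_le_norm_add_norm_sub' w z, mem_ball_iff_norm.1 hw]
    rw [norm_smul]
    gcongr
    calc ‖cexp (w * t)‖ ≤ Real.exp ‖w * t‖ := norm_exp_le_exp_norm _
      _ ≤ Real.exp ((‖z‖ + 1) * |t|) := by
        rw [norm_mul, norm_real, Real.norm_eq_abs]
        gcongr
  · rw [smul_smul]
    exact ((hasDerivAt_mul_const (t : ℂ)).cexp).smul_const (φ t)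

theorem differentiable_finiteLaplace (hφ : IntervalIntegrable φ μ c d) :
    Differentiable ℂ (finiteLaplace μ c d φ) :=
  fun z ↦ (hasDerivAt_finiteLaplace hφ z).differentiableAt

theorem iteratedDeriv_finiteLaplace (hφ : IntervalIntegrable φ μ c d) (n : ℕ) :
    iteratedDeriv n (finiteLaplace μ c d φ) =
      finiteLaplace μ c d (fun t ↦ (t : ℂ) ^ n • φ t) := by
  induction n generalizing φ with
  | zero => simp
  | succ n ih =>
    have deriv_eq : deriv (finiteLaplace μ c d φ) =
        finiteLaplace μ c d (fun t ↦ (t : ℂ) • φ t) :=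
      funext fun z ↦ (hasDerivAt_finiteLaplace hφ z).deriv
    rw [iteratedDeriv_succ', deriv_eq, ih (hφ.continuousOn_smul (by fun_prop))]
    simp only [smul_smul, pow_succ]

end FiniteLaplace

section Kummer

variable {a : ℂ}

theorem intervalIntegrable_one_sub_cpow (ha : 1 < a.re) :
    IntervalIntegrable (fun u : ℝ ↦ (1 - u : ℂ) ^ (a - 2)) volume 0 1 := by
  have h := betaIntegral_convergent (u := 1) (v := a - 1) (by simp) (by simpa using ha)
  simpa [sub_sub, one_add_one_eq_two] using h

theorem integral_pow_mul_one_sub_cpow (ha : 1 < a.re) (n : ℕ) :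
    ∫ u in (0 : ℝ)..1, (u : ℂ) ^ n * (1 - u : ℂ) ^ (a - 2) =
      n.factorial / ((a - 1) * ∏ i ∈ Finset.range n, (a + i)) := by
  have pochhammer_shift : ∏ j ∈ Finset.range (n + 1), (a - 1 + j) =
      (a - 1) * ∏ i ∈ Finset.range n, (a + i) := by
    rw [Finset.prod_range_succ', mul_comm]
    congr 1
    · simp
    · exact Finset.prod_congr rfl fun i _ ↦ by push_cast; ring
  have h := betaIntegral_eval_nat_add_one_right (u := a - 1) (by simpa using ha) n
  rw [betaIntegral_symm, pochhammer_shift] at h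
  simpa [betaIntegral, sub_sub, one_add_one_eq_two] using h

/-- Kummer's confluent hypergeometric function `₁F₁(1; a; z)`, defined by Euler's integral and hence
meaningful only where that converges, for `1 < re a`. -/
noncomputable def kummerOne (a z : ℂ) : ℂ :=
  (a - 1) * finiteLaplace volume 0 1 (fun u ↦ (1 - u : ℂ) ^ (a - 2)) z

theorem differentiable_kummerOne (ha : 1 < a.re) : Differentiable ℂ (kummerOne a) :=
  (differentiable_finiteLaplace (intervalIntegrable_one_sub_cpow ha)).const_mul (a - 1)

theorem iteratedDeriv_kummerOne_zero (ha : 1 < a.re) (n : ℕ) :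
    iteratedDeriv n (kummerOne a) 0 = n.factorial / ∏ i ∈ Finset.range n, (a + i) := by
  have ha₁ : a - 1 ≠ 0 := sub_ne_zero.2 fun h ↦ by simp [h] at ha
  unfold kummerOne
  rw [iteratedDeriv_const_mul_field,
    iteratedDeriv_finiteLaplace (intervalIntegrable_one_sub_cpow ha), finiteLaplace]
  simp only [zero_mul, Complex.exp_zero, smul_eq_mul, one_mul]
  rw [integral_pow_mul_one_sub_cpow ha, ← mul_div_assoc, mul_div_mul_left _ _ ha₁]

theorem kummerOne_zero (ha : 1 < a.re) : kummerOne a 0 = 1 := by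
  simpa using iteratedDeriv_kummerOne_zero ha 0

theorem cexp_neg_mul_cos_mul_cos_mul_sin (t θ : ℂ) :
    cexp (-(t * Complex.cos θ)) * Complex.cos (t * Complex.sin θ) =
      (cexp (-t * cexp (θ * I)) + cexp (-t * (cexp (θ * I))⁻¹)) / 2 := by
  rw [← Complex.exp_neg, ← neg_mul θ, exp_mul_I, exp_mul_I, Complex.cos_neg, Complex.sin_neg,
    Complex.cos.eq_1 (t * _), mul_div_assoc', mul_add, ← Complex.exp_add, ← Complex.exp_add,
    add_comm]
  ring_nf

theorem integral_cexp_mul_cos_eq_kummerOne_add (ha : 1 < a.re) (b θ : ℂ) :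
    2 * (a - 1) * ∫ u in (0 : ℝ)..1,
        cexp (-(b * u * Complex.cos θ)) * Complex.cos (b * u * Complex.sin θ) *
          (1 - u : ℂ) ^ (a - 2) =
      kummerOne a (-b * cexp (θ * I)) + kummerOne a (-b * (cexp (θ * I))⁻¹) := by
  have integrand_integrable (z : ℂ) :
      IntervalIntegrable (fun u : ℝ ↦ cexp (z * u) * (1 - u : ℂ) ^ (a - 2)) volume 0 1 :=
    (intervalIntegrable_one_sub_cpow ha).continuousOn_mul (by fun_prop)
  simp only [kummerOne, finiteLaplace, smul_eq_mul]
  rw [← mul_add, ← intervalIntegral.integral_add (integrand_integrable _) (integrand_integrable _),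
    mul_comm 2, mul_assoc, ← intervalIntegral.integral_const_mul]
  congr! 3
  rw [cexp_neg_mul_cos_mul_cos_mul_sin]
  ring_nf

end Kummer

section CircleAverage

variable {c : ℂ} {R : ℝ}

theorem circleAverage_inv_pow_smul {E : Type*} [NormedAddCommGroup E] [NormedSpace ℂ E]
    [CompleteSpace E] {f : ℂ → E} (hR : 0 < R) (hf : DiffContOnCl ℂ f (ball c R)) (n : ℕ) :
    circleAverage (fun z ↦ ((z - c) ^ n)⁻¹ • f z) c R =
      (n.factorial : ℂ)⁻¹ • iteratedDeriv n f c := by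
  have h := hf.circleIntegral_one_div_sub_center_pow_smul hR n
  rw [circleAverage_eq_circleIntegral hR.ne']
  simp only [smul_smul, ← mul_inv, ← pow_succ']
  simp only [one_div] at h
  rw [h, smul_smul]
  congr 1
  field_simp [two_pi_I_ne_zero]

theorem continuousOn_comp_inv_sphere {X : Type*} [TopologicalSpace X] {F : ℂ → X}
    (hF : ContinuousOn F (sphere 0 1)) : ContinuousOn (fun z ↦ F z⁻¹) (sphere 0 1) :=
  hF.comp (continuousOn_inv₀.mono fun _ hz ↦ ne_of_mem_sphere hz one_ne_zero)
    fun _ hz ↦ by simpa using hz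

theorem circleAverage_pow_mul_add_inv_sub {F : ℂ → ℂ} (hF : DiffContOnCl ℂ F (ball 0 1)) (n : ℕ) :
    circleAverage (fun z ↦ z ^ n * (F z + F z⁻¹ - F 0)) 0 1 =
      iteratedDeriv n F 0 / n.factorial := by
  have analytic_part : circleAverage (fun z ↦ z ^ n * (F z - F 0)) 0 1 = 0 := by
    have h : DiffContOnCl ℂ (fun z ↦ z ^ n * (F z - F 0)) (ball 0 |1|) := by
      simpa using (differentiable_pow n).diffContOnCl.smul (hF.sub_const (F 0))
    simpa using h.circleAverage
  have coanalytic_part :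
      circleAverage (fun z ↦ z ^ n * F z⁻¹) 0 1 = iteratedDeriv n F 0 / n.factorial := by
    have cauchy := circleAverage_inv_pow_smul one_pos hF n
    rw [← circleAverage_zero_one_congr_inv] at cauchy
    simpa [div_eq_inv_mul] using cauchy
  have continuousOn_sphere : ContinuousOn F (sphere 0 1) :=
    hF.continuousOn_ball.mono sphere_subset_closedBall
  have continuousOn_inv := continuousOn_comp_inv_sphere continuousOn_sphere
  calc circleAverage (fun z ↦ z ^ n * (F z + F z⁻¹ - F 0)) 0 1
      = circleAverage (fun z ↦ z ^ n * (F z - F 0) + z ^ n * F z⁻¹) 0 1 := by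
        congr! 2
        ring
    _ = circleAverage (fun z ↦ z ^ n * (F z - F 0)) 0 1 +
          circleAverage (fun z ↦ z ^ n * F z⁻¹) 0 1 :=
        circleAverage_fun_add (ContinuousOn.circleIntegrable zero_le_one (by fun_prop))
          (ContinuousOn.circleIntegrable zero_le_one (.mul (by fun_prop) continuousOn_inv))
    _ = iteratedDeriv n F 0 / n.factorial := by rw [analytic_part, coanalytic_part, zero_add]

theorem circleAverage_eval_mul_eq {g : ℂ → ℂ} (hg : CircleIntegrable g c R) (L : ℂ[X] →ₗ[ℂ] ℂ)
    (hL : ∀ n : ℕ, circleAverage (fun z ↦ z ^ n * g z) c R = L (X ^ n)) (w : ℂ[X]) :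
    circleAverage (fun z ↦ w.eval z * g z) c R = L w := by
  have integrable (v : ℂ[X]) : CircleIntegrable (fun z ↦ v.eval z * g z) c R :=
    IntervalIntegrable.continuousOn_mul hg (by fun_prop)
  induction w using Polynomial.induction_on' with
  | add q r hq hr =>
    simp only [eval_add, add_mul]
    rw [circleAverage_fun_add (integrable q) (integrable r), hq, hr, map_add]
  | monomial n k =>
    simp only [eval_monomial, mul_assoc]
    rw [← C_mul_X_pow_eq_monomial, ← smul_eq_C_mul, map_smul, ← hL n, ← circleAverage_fun_smul]
    simp only [smul_eq_mul]

theorem integral_mul_eq_circleAverage {p : ℝ → ℂ} {g : ℂ → ℂ}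
    (hp : ∀ θ : ℝ, 2 * π * p θ = g (cexp (θ * I))) (f : ℂ → ℂ) :
    ∫ θ in (0 : ℝ)..(2 * π), f (cexp (θ * I)) * p θ = circleAverage (fun z ↦ f z * g z) 0 1 := by
  rw [circleAverage, ← intervalIntegral.integral_smul]
  refine intervalIntegral.integral_congr fun θ _ ↦ ?_
  have circleMap_eq : circleMap 0 1 θ = cexp (θ * I) := by simp [circleMap]
  simp only [circleMap_eq, ← hp, real_smul]
  push_cast
  field_simp

end CircleAverage

section KrallFrink

variable {a : ℂ}

/-- The density `2π p` of the functional `S̃` with respect to normalized arc length, as a function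
of `z = e^{iθ}`. The constant `1` is `₁F₁(1; a; 0)`. -/
noncomputable def krallFrinkDensity (a b z : ℂ) : ℂ :=
  kummerOne a (-b * z) + kummerOne a (-b * z⁻¹) - 1

theorem circleIntegrable_krallFrinkDensity (ha : 1 < a.re) (b : ℂ) :
    CircleIntegrable (krallFrinkDensity a b) 0 1 := by
  have hF : Continuous fun z ↦ kummerOne a (-b * z) :=
    (differentiable_kummerOne ha).continuous.comp (by fun_prop)
  exact ((hF.continuousOn.add (continuousOn_comp_inv_sphere hF.continuousOn)).sub
    continuousOn_const).circleIntegrable zero_le_one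

theorem circleAverage_pow_mul_krallFrinkDensity (ha : 1 < a.re) (b : ℂ) (n : ℕ) :
    circleAverage (fun z ↦ z ^ n * krallFrinkDensity a b z) 0 1 =
      (-b) ^ n / ∏ i ∈ Finset.range n, (a + i) := by
  have hF : Differentiable ℂ fun z ↦ kummerOne a (-b * z) :=
    (differentiable_kummerOne ha).comp (by fun_prop)
  have h := circleAverage_pow_mul_add_inv_sub hF.diffContOnCl n
  rw [iteratedDeriv_comp_const_mul (differentiable_kummerOne ha).contDiff] at h
  simp only [mul_zero, kummerOne_zero ha, iteratedDeriv_kummerOne_zero ha] at h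
  refine h.trans ?_
  field_simp [n.factorial_ne_zero]

theorem ofReal_integral_exp_mul_cos_mul_rpow (a b θ : ℝ) :
    ((∫ u in (0 : ℝ)..1, Real.exp (-(b * u * Real.cos θ)) * Real.cos (b * u * Real.sin θ) *
        (1 - u) ^ (a - 2) : ℝ) : ℂ) =
      ∫ u in (0 : ℝ)..1, cexp (-(b * u * Complex.cos θ)) * Complex.cos (b * u * Complex.sin θ) *
        (1 - u : ℂ) ^ (a - 2 : ℂ) := by
  rw [← intervalIntegral.integral_ofReal]
  refine intervalIntegral.integral_congr fun u hu ↦ ?_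
  rw [Set.uIcc_of_le zero_le_one] at hu
  push_cast [ofReal_cpow (sub_nonneg.2 hu.2)]
  rfl

theorem functional_comparison_general {b : ℂ} (ha : 1 < a.re) (hb : b ≠ 0) (p : ℝ → ℂ)
    (hp : ∀ θ : ℝ, 2 * π * p θ = -1 + 2 * (a - 1) * ∫ u in (0 : ℝ)..1,
      cexp (-(b * u * Complex.cos θ)) * Complex.cos (b * u * Complex.sin θ) *
        (1 - u : ℂ) ^ (a - 2)) :
    (∀ n : ℕ, ∫ θ in (0 : ℝ)..(2 * π), cexp (θ * I) ^ n * p θ =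
      (-b) ^ n / ∏ i ∈ Finset.range n, (a + i)) ∧
    ∀ S : ℂ[X] →ₗ[ℂ] ℂ,
      (∀ n : ℕ, S (X ^ n) = (-b) ^ (n + 1) / ∏ i ∈ Finset.range n, (a + i)) →
      ∀ w : ℂ[X], ∫ θ in (0 : ℝ)..(2 * π), w.eval (cexp (θ * I)) * p θ = -(1 / b) * S w := by
  have density_eq (θ : ℝ) : 2 * π * p θ = krallFrinkDensity a b (cexp (θ * I)) := by
    rw [hp, integral_cexp_mul_cos_eq_kummerOne_add ha, krallFrinkDensity, neg_add_eq_sub]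
  have moments := circleAverage_pow_mul_krallFrinkDensity ha b
  refine ⟨fun n ↦ (integral_mul_eq_circleAverage density_eq (· ^ n)).trans (moments n),
    fun S hS w ↦ ?_⟩
  have moments_eq (n : ℕ) : circleAverage (fun z ↦ z ^ n * krallFrinkDensity a b z) 0 1 =
      (-(1 / b) • S) (X ^ n) := by
    rw [moments, LinearMap.smul_apply, hS, pow_succ, smul_eq_mul]
    field_simp
  rw [integral_mul_eq_circleAverage density_eq (w.eval ·)]
  exact circleAverage_eval_mul_eq (circleIntegrable_krallFrinkDensity ha b) _ moments_eq w

end KrallFrink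

open Polynomial in
/-- The functional `S̃(w) = ∫₀^{2π} w(e^{iθ}) p(θ) dθ` has moments `(-b)ⁿ/(a)ₙ`, and hence
`S̃(w) = -(1/b) S(w)` for any linear functional `S` on polynomials with the Krall–Frink
moments `S(zⁿ) = (-b)^{n+1}/(a)ₙ`. -/
theorem functional_comparison (a b : ℝ) (ha : 1 < a) (hb0 : 0 < |b|) (hb : |b| < 1/3)
    (p : ℝ → ℝ)
    (hp : ∀ θ : ℝ, 2 * Real.pi * p θ = -1 + 2 * (a - 1) * ∫ u in (0:ℝ)..1,
        Real.exp (-(b * u * Real.cos θ)) * Real.cos (b * u * Real.sin θ) * (1 - u) ^ (a - 2)) :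
    (∀ n : ℕ, ∫ θ in (0:ℝ)..(2 * Real.pi),
        (Complex.exp (θ * Complex.I)) ^ n * (p θ : ℂ) =
        (-(b : ℂ)) ^ n / (∏ i ∈ Finset.range n, ((a : ℂ) + i))) ∧
    ∀ S : Polynomial ℂ →ₗ[ℂ] ℂ,
      (∀ n : ℕ, S (Polynomial.X ^ n) =
        (-(b : ℂ)) ^ (n + 1) / (∏ i ∈ Finset.range n, ((a : ℂ) + i))) →
      ∀ w : Polynomial ℂ,
        (∫ θ in (0:ℝ)..(2 * Real.pi), w.eval (Complex.exp (θ * Complex.I)) * (p θ : ℂ)) =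
          -(1 / (b : ℂ)) * S w := by
  refine functional_comparison_general (by simpa using ha) (by simpa using hb0) (p ·) fun θ ↦ ?_
  simpa [ofReal_integral_exp_mul_cos_mul_rpow] using congrArg ((↑) : ℝ → ℂ) (hp θ)
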